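/- For any real numbers u, v, η with η > 0 such that [u, u+η] ⊆ [0,1] and [v, v+η] ⊆ [0,1], for all sufficiently large n there exists an integer a₀ with u·F_n ≤ a₀ ≤ (u + η/2)·F_n such that the fractional part {F_{n−1}·a₀/F_n} lies in the open interval (v + η/3, v + 2η/3). -/

import Mathlib

/-!
The ratios `F_{n-1} / F_n` converge to the irrational number `1 / φ`. Choose integers `k`, `m` such
that `k / φ + m` is positive but smaller than the width of the target interval. For every `β` close
to `1 / φ`, moving `a` by `k` advances `β * a` modulo `1` by the almost constant small step
`k * β + m`, so boundedly many such moves bring it into the target. The distance travelled by `a` is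
thus bounded independently of `n`, whereas the window available to `a` has length proportional
to `F_n`.
-/

open Filter Set Topology

section FloorRing

variable {K : Type*} [Field K] [LinearOrder K] [IsStrictOrderedRing K] [FloorRing K] {c d : K}

theorem exists_nat_fract_add_mul_mem_Ioo {δ : K} (hδ : 0 < δ) (hδcd : δ < d - c) (hc : 0 ≤ c)
    (hd : d ≤ 1) (x : K) : ∃ j : ℕ, (j : K) ≤ 1 / δ + 1 ∧ Int.fract (x + j * δ) ∈ Ioo c d := by
  -- `w` is the distance to travel upwards from `x` to reach `c` modulo `1`.
  set w := Int.fract (c - x) with hw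
  have hw_nonneg : 0 ≤ w / δ := div_nonneg (Int.fract_nonneg _) hδ.le
  set j := ⌊w / δ⌋₊ + 1
  have hj_le : (j : K) ≤ w / δ + 1 := by
    simpa only [j, Nat.cast_add_one, add_le_add_iff_right] using Nat.floor_le hw_nonneg
  have hw_lt : w < j * δ := by
    simpa only [j, Nat.cast_add_one, div_lt_iff₀ hδ] using Nat.lt_floor_add_one (w / δ)
  have hle_w : j * δ ≤ w + δ := by
    calc j * δ ≤ (w / δ + 1) * δ := by gcongr
      _ = w + δ := by field_simp
  have hfract : Int.fract (x + j * δ) = c + (j * δ - w) := by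
    refine Int.fract_eq_iff.2 ⟨by linarith, by linarith, -⌊c - x⌋, ?_⟩
    push_cast
    linear_combination hw - Int.self_sub_floor (c - x)
  refine ⟨j, hj_le.trans ?_, ?_⟩
  · gcongr
    exact (Int.fract_lt_one _).le
  · rw [hfract]
    constructor <;> linarith

theorem exists_int_abs_sub_le_fract_mul_mem_Ioo {θ : K} {k m : ℤ} (hpos : 0 < k * θ + m)
    (hlt : k * θ + m < d - c) (hc : 0 ≤ c) (hd : d ≤ 1) (s : K) :
    ∃ a : ℤ, |a - s| ≤ 1 + (1 / (k * θ + m) + 1) * |(k : K)| ∧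
      Int.fract (θ * a) ∈ Ioo c d := by
  obtain ⟨j, hj, hfract⟩ := exists_nat_fract_add_mul_mem_Ioo hpos hlt hc hd (θ * ⌊s⌋)
  refine ⟨⌊s⌋ + j * k, ?_, ?_⟩
  · have hfloor : |(⌊s⌋ : K) - s| ≤ 1 := by
      rw [abs_sub_comm, Int.self_sub_floor, Int.abs_fract]
      exact (Int.fract_lt_one s).le
    calc |((⌊s⌋ + j * k : ℤ) : K) - s| = |(⌊s⌋ - s) + j * k| := by push_cast; ring_nf
      _ ≤ |(⌊s⌋ : K) - s| + j * |(k : K)| := by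
        simpa only [abs_mul, Nat.abs_cast] using abs_add_le ((⌊s⌋ : K) - s) (j * k)
      _ ≤ 1 + (1 / (k * θ + m) + 1) * |(k : K)| := by gcongr
  · have hshift : θ * ((⌊s⌋ + j * k : ℤ) : K) + ((j * m : ℤ) : K)
        = θ * ⌊s⌋ + j * (k * θ + m) := by
      push_cast
      ring
    rwa [← Int.fract_add_intCast _ (j * m), hshift]

end FloorRing

section Irrational

variable {α ε : ℝ}

theorem exists_int_mul_add_mem_Ioo_of_irrational (hα : Irrational α) (hε : 0 < ε) :
    ∃ k m : ℤ, (k * α + m : ℝ) ∈ Ioo 0 ε := by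
  have hdense : Dense (AddSubgroup.closure {α, 1} : Set ℝ) :=
    dense_addSubgroupClosure_pair_iff.2 (by rwa [div_one])
  obtain ⟨y, hy, hmem⟩ := hdense.exists_between hε
  obtain ⟨k, m, rfl⟩ := AddSubgroup.mem_closure_pair.1 hy
  exact ⟨k, m, by simpa only [zsmul_eq_mul, mul_one] using hmem⟩

theorem exists_eventually_nhds_fract_mul_mem_Ioo_of_irrational (hα : Irrational α) (hε : 0 < ε) :
    ∃ R : ℝ, ∀ᶠ β : ℝ in 𝓝 α, ∀ c d : ℝ, 0 ≤ c → d ≤ 1 → ε ≤ d - c → ∀ s : ℝ,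
      ∃ a : ℤ, |a - s| ≤ R ∧ Int.fract (β * a) ∈ Ioo c d := by
  obtain ⟨k, m, hpos, hlt⟩ := exists_int_mul_add_mem_Ioo_of_irrational hα hε
  set δ : ℝ := k * α + m
  have hstep : Tendsto (fun β : ℝ => k * β + m) (𝓝 α) (𝓝 δ) :=
    Continuous.tendsto (by fun_prop) α
  refine ⟨1 + (1 / (δ / 2) + 1) * |(k : ℝ)|, ?_⟩
  filter_upwards [hstep.eventually_const_lt (half_lt_self hpos), hstep.eventually_lt_const hlt]
    with β hβ_gt hβ_lt c d hc hd hcd s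
  obtain ⟨a, ha, hfract⟩ := exists_int_abs_sub_le_fract_mul_mem_Ioo
    ((half_pos hpos).trans hβ_gt) (hβ_lt.trans_le hcd) hc hd s
  refine ⟨a, ha.trans ?_, hfract⟩
  gcongr

end Irrational

section Fibonacci

theorem tendsto_fib_pred_div_fib_atTop :
    Tendsto (fun n : ℕ => (Nat.fib (n - 1) : ℝ) / Nat.fib n) atTop (𝓝 (-Real.goldenConj)) :=
  (tendsto_add_atTop_iff_nat 1).1 tendsto_fib_div_fib_succ_atTop

theorem tendsto_fib_atTop : Tendsto Nat.fib atTop atTop :=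
  tendsto_atTop_mono (fun n => Nat.sub_le_of_le_add (Nat.le_fib_add_one n))
    (tendsto_sub_atTop_nat 1)

theorem stmt_15_general {δ ε : ℝ} (hδ : 0 < δ) (hε : 0 < ε) :
    ∀ᶠ n : ℕ in atTop, ∀ u c d : ℝ, 0 ≤ c → d ≤ 1 → ε ≤ d - c →
      ∃ a : ℤ, u * (Nat.fib n : ℝ) ≤ a ∧ a ≤ (u + δ) * (Nat.fib n : ℝ) ∧
        Int.fract ((Nat.fib (n - 1) : ℝ) * a / Nat.fib n) ∈ Ioo c d := by
  obtain ⟨R, hR⟩ :=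
    exists_eventually_nhds_fract_mul_mem_Ioo_of_irrational Real.goldenConj_irrational.neg hε
  have hwindow : Tendsto (fun n => δ / 2 * (Nat.fib n : ℝ)) atTop atTop :=
    (tendsto_natCast_atTop_atTop.comp tendsto_fib_atTop).const_mul_atTop (half_pos hδ)
  filter_upwards [tendsto_fib_pred_div_fib_atTop.eventually hR, hwindow.eventually_ge_atTop R]
    with n hn hRn u c d hc hd hcd
  obtain ⟨a, ha, hfract⟩ := hn c d hc hd hcd ((u + δ / 2) * Nat.fib n)
  obtain ⟨hlower, hupper⟩ := abs_le.1 (ha.trans hRn)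
  refine ⟨a, by linarith, by linarith, ?_⟩
  rwa [mul_div_right_comm]

end Fibonacci

/-- For intervals `[u,u+η], [v,v+η] ⊆ [0,1]` and all `n` large enough, there is an integer
`a₀` with `u F_n ≤ a₀ ≤ (u+η/2) F_n` such that `{F_{n-1} a₀ / F_n} ∈ (v+η/3, v+2η/3)`. -/
theorem stmt_15 (u v η : ℝ) (hη : 0 < η)
    (hI : Set.Icc u (u + η) ⊆ Set.Icc (0 : ℝ) 1)
    (hJ : Set.Icc v (v + η) ⊆ Set.Icc (0 : ℝ) 1) :
    ∃ N : ℕ, ∀ n : ℕ, N ≤ n →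
      ∃ a₀ : ℤ, u * (Nat.fib n : ℝ) ≤ (a₀ : ℝ) ∧
        (a₀ : ℝ) ≤ (u + η / 2) * (Nat.fib n : ℝ) ∧
        Int.fract ((Nat.fib (n - 1) : ℝ) * (a₀ : ℝ) / (Nat.fib n : ℝ)) ∈
          Set.Ioo (v + η / 3) (v + 2 * η / 3) := by
  obtain ⟨hv_nonneg, hv_le⟩ := (Icc_subset_Icc_iff (by linarith)).1 hJ
  obtain ⟨N, hN⟩ := eventually_atTop.1 (stmt_15_general (half_pos hη) (div_pos hη three_pos))
  exact ⟨N, fun n hn => hN n hn u _ _ (by linarith) (by linarith) (by linarith)⟩
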